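/- arXiv:2604.10952 — 2 statements merged into one kernel-verified Lean document; each statement's English description precedes it below -/
import Mathlib

section
/- The set function h is monotone: for all subsets P₁ ⊆ P₂ of {1,…,m}, h(P₁) ≤ h(P₂). -/
open Finset

noncomputable section

/-- Frobenius inner product `⟨S, γ⟩ = Σ_{i,j} S_{ij} γ_{ij}`. -/
def dotS {m n : ℕ} (S γ : Fin m → Fin n → ℝ) : ℝ := ∑ i, ∑ j, S i j * γ i j

/-- Transport polytope with equality marginals. -/
def Gamma {m n : ℕ} (μ : Fin m → ℝ) (ν : Fin n → ℝ) : Set (Fin m → Fin n → ℝ) :=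
  {γ | (∀ i j, 0 ≤ γ i j) ∧ (∀ i, ∑ j, γ i j = μ i) ∧ (∀ j, ∑ i, γ i j = ν j)}

/-- Semi-relaxed transport polytope: target marginal constraint is `≤`. -/
def GammaLe {m n : ℕ} (μ : Fin m → ℝ) (ν : Fin n → ℝ) : Set (Fin m → Fin n → ℝ) :=
  {γ | (∀ i j, 0 ≤ γ i j) ∧ (∀ i, ∑ j, γ i j = μ i) ∧ (∀ j, ∑ i, γ i j ≤ ν j)}

/-- Indicator vector of a subset `P ⊆ {1,…,m}`. -/
def indVec {m : ℕ} (P : Finset (Fin m)) : Fin m → ℝ := fun i => if i ∈ P then 1 else 0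

/-- `h(P) = max_{γ ∈ Γ(1_P, (|P|/n)𝟙)} ⟨S, γ⟩`. -/
def hval {m n : ℕ} (S : Fin m → Fin n → ℝ) (P : Finset (Fin m)) : ℝ :=
  sSup (dotS S '' Gamma (indVec P) (fun _ => (P.card : ℝ) / (n : ℝ)))

/-- `f(P) = max_{γ ∈ Γ_≤(1_P, (k/n)𝟙)} ⟨S, γ⟩`. -/
def fval {m n : ℕ} (k : ℕ) (S : Fin m → Fin n → ℝ) (P : Finset (Fin m)) : ℝ :=
  sSup (dotS S '' GammaLe (indVec P) (fun _ => (k : ℝ) / (n : ℝ)))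

/-!
Couplings add: if `γ` couples `μ` with `ν` and `γ'` couples `μ'` with `ν'`, then `γ + γ'` couples
`μ + μ'` with `ν + ν'`. As `1_{P ∪ Q} = 1_P + 1_Q` and `|P ∪ Q| = |P| + |Q|` for disjoint `P` and
`Q`, this makes `h` superadditive on disjoint sets. Evaluating the objective at the product
coupling bounds `h (P₂ \ P₁)` below by the average `(1/n) ∑_{i ∈ P₂ \ P₁} ∑_j S_{ij}`, which is
nonnegative, so `h P₁ ≤ h P₁ + h (P₂ \ P₁) ≤ h P₂`.
-/

section Transport

variable {m n : ℕ} {μ μ' : Fin m → ℝ} {ν ν' : Fin n → ℝ} {γ γ' : Fin m → Fin n → ℝ}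

theorem dotS_add (S γ γ' : Fin m → Fin n → ℝ) : dotS S (γ + γ') = dotS S γ + dotS S γ' := by
  simp only [dotS, Pi.add_apply, mul_add, sum_add_distrib]

theorem add_mem_Gamma (hγ : γ ∈ Gamma μ ν) (hγ' : γ' ∈ Gamma μ' ν') :
    γ + γ' ∈ Gamma (μ + μ') (ν + ν') := by
  obtain ⟨nonneg, row, col⟩ := hγ
  obtain ⟨nonneg', row', col'⟩ := hγ'
  refine ⟨fun i j => add_nonneg (nonneg i j) (nonneg' i j), fun i => ?_, fun j => ?_⟩
  · simp only [Pi.add_apply, sum_add_distrib, row, row']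
  · simp only [Pi.add_apply, sum_add_distrib, col, col']

theorem le_left_marginal_of_mem_Gamma (hγ : γ ∈ Gamma μ ν) (i : Fin m) (j : Fin n) :
    γ i j ≤ μ i :=
  hγ.2.1 i ▸ single_le_sum (fun j _ => hγ.1 i j) (mem_univ j)

theorem bddAbove_dotS_image_Gamma (S : Fin m → Fin n → ℝ) (μ : Fin m → ℝ) (ν : Fin n → ℝ) :
    BddAbove (dotS S '' Gamma μ ν) := by
  refine ⟨∑ i, ∑ j, |S i j| * μ i, ?_⟩
  rintro _ ⟨γ, hγ, rfl⟩
  refine sum_le_sum fun i _ => sum_le_sum fun j _ => ?_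
  calc S i j * γ i j ≤ |S i j| * γ i j :=
        mul_le_mul_of_nonneg_right (le_abs_self _) (hγ.1 i j)
    _ ≤ |S i j| * μ i :=
        mul_le_mul_of_nonneg_left (le_left_marginal_of_mem_Gamma hγ i j) (abs_nonneg _)

/-- The optimal value of the transport problem with marginals `μ` and `ν` that maximizes `⟨S, γ⟩`,
with value `0` if no coupling of `μ` and `ν` exists. -/
def transportValue (S : Fin m → Fin n → ℝ) (μ : Fin m → ℝ) (ν : Fin n → ℝ) : ℝ :=
  sSup (dotS S '' Gamma μ ν)

theorem dotS_le_transportValue (S : Fin m → Fin n → ℝ) (hγ : γ ∈ Gamma μ ν) :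
    dotS S γ ≤ transportValue S μ ν :=
  le_csSup (bddAbove_dotS_image_Gamma S μ ν) (Set.mem_image_of_mem _ hγ)

open scoped Pointwise in
theorem transportValue_add_le (S : Fin m → Fin n → ℝ) (h : (Gamma μ ν).Nonempty)
    (h' : (Gamma μ' ν').Nonempty) :
    transportValue S μ ν + transportValue S μ' ν' ≤ transportValue S (μ + μ') (ν + ν') := by
  have image_add_subset :
      dotS S '' Gamma μ ν + dotS S '' Gamma μ' ν' ⊆ dotS S '' Gamma (μ + μ') (ν + ν') := by
    rintro _ ⟨_, ⟨γ, hγ, rfl⟩, _, ⟨γ', hγ', rfl⟩, rfl⟩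
    exact ⟨γ + γ', add_mem_Gamma hγ hγ', dotS_add S γ γ'⟩
  unfold transportValue
  rw [← csSup_add (h.image _) (bddAbove_dotS_image_Gamma S μ ν)
    (h'.image _) (bddAbove_dotS_image_Gamma S μ' ν')]
  exact csSup_le_csSup (bddAbove_dotS_image_Gamma S _ _) ((h.image _).add (h'.image _))
    image_add_subset

/-- The product coupling of `μ` with the uniform distribution on `Fin n`: each mass `μ i` is spread
evenly over the `n` targets. -/
def uniformCoupling (n : ℕ) (μ : Fin m → ℝ) : Fin m → Fin n → ℝ := fun i _ => μ i / n

theorem uniformCoupling_mem_Gamma (hn : n ≠ 0) (hμ : ∀ i, 0 ≤ μ i) :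
    uniformCoupling n μ ∈ Gamma μ (fun _ => (∑ i, μ i) / n) := by
  refine ⟨fun i _ => div_nonneg (hμ i) n.cast_nonneg, fun i => ?_, fun _ => (sum_div ..).symm⟩
  simp only [uniformCoupling, sum_const, card_univ, Fintype.card_fin, nsmul_eq_mul]
  exact mul_div_cancel₀ _ (Nat.cast_ne_zero.2 hn)

theorem dotS_uniformCoupling (S : Fin m → Fin n → ℝ) (μ : Fin m → ℝ) :
    dotS S (uniformCoupling n μ) = (∑ i, μ i * ∑ j, S i j) / n := by
  simp only [dotS, uniformCoupling, ← sum_mul, sum_div]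
  exact sum_congr rfl fun i _ => by ring

end Transport

section Indicator

variable {m n : ℕ} {P Q : Finset (Fin m)}

theorem indVec_nonneg (P : Finset (Fin m)) (i : Fin m) : 0 ≤ indVec P i := by
  unfold indVec
  positivity

theorem sum_indVec_mul (P : Finset (Fin m)) (f : Fin m → ℝ) :
    ∑ i, indVec P i * f i = ∑ i ∈ P, f i := by
  simp [indVec]

theorem sum_indVec (P : Finset (Fin m)) : ∑ i, indVec P i = #P := by
  simp [indVec]

theorem indVec_union_of_disjoint (h : Disjoint P Q) : indVec (P ∪ Q) = indVec P + indVec Q := by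
  ext i
  have not_mem_right : i ∈ P → i ∉ Q := fun hP => disjoint_left.1 h hP
  by_cases hP : i ∈ P <;> simp_all [indVec]

theorem uniformCoupling_indVec_mem_Gamma (hn : n ≠ 0) (P : Finset (Fin m)) :
    uniformCoupling n (indVec P) ∈ Gamma (indVec P) (fun _ => (#P : ℝ) / n) :=
  sum_indVec P ▸ uniformCoupling_mem_Gamma hn (indVec_nonneg P)

theorem hval_add_le_hval_union (hn : n ≠ 0) (S : Fin m → Fin n → ℝ) (h : Disjoint P Q) :
    hval S P + hval S Q ≤ hval S (P ∪ Q) := by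
  have target_marginal_add : (fun _ : Fin n => (#(P ∪ Q) : ℝ) / n) =
      (fun _ => (#P : ℝ) / n) + (fun _ => (#Q : ℝ) / n) := by
    ext
    simp only [card_union_of_disjoint h, Nat.cast_add, add_div, Pi.add_apply]
  calc hval S P + hval S Q
      ≤ transportValue S (indVec P + indVec Q)
          ((fun _ => (#P : ℝ) / n) + (fun _ => (#Q : ℝ) / n)) :=
        transportValue_add_le S ⟨_, uniformCoupling_indVec_mem_Gamma hn P⟩
          ⟨_, uniformCoupling_indVec_mem_Gamma hn Q⟩
    _ = hval S (P ∪ Q) := by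
        rw [← indVec_union_of_disjoint h, ← target_marginal_add, transportValue, hval]

theorem sum_div_le_hval (hn : n ≠ 0) (S : Fin m → Fin n → ℝ) (P : Finset (Fin m)) :
    (∑ i ∈ P, ∑ j, S i j) / n ≤ hval S P := by
  calc (∑ i ∈ P, ∑ j, S i j) / n = dotS S (uniformCoupling n (indVec P)) := by
        rw [dotS_uniformCoupling, sum_indVec_mul]
    _ ≤ hval S P := dotS_le_transportValue S (uniformCoupling_indVec_mem_Gamma hn P)

end Indicator

theorem stmt_1_general {m n : ℕ} (hn : n ≠ 0) (S : Fin m → Fin n → ℝ)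
    {P₁ P₂ : Finset (Fin m)} (hS : 0 ≤ ∑ i ∈ P₂ \ P₁, ∑ j, S i j) (hsub : P₁ ⊆ P₂) :
    hval S P₁ ≤ hval S P₂ := by
  have hval_sdiff_nonneg : 0 ≤ hval S (P₂ \ P₁) :=
    (div_nonneg hS n.cast_nonneg).trans (sum_div_le_hval hn S _)
  calc hval S P₁ ≤ hval S P₁ + hval S (P₂ \ P₁) := le_add_of_nonneg_right hval_sdiff_nonneg
    _ ≤ hval S (P₁ ∪ P₂ \ P₁) := hval_add_le_hval_union hn S disjoint_sdiff
    _ = hval S P₂ := by rw [union_sdiff_of_subset hsub]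

/-- `h` is monotone. -/
theorem stmt_1 (m n : ℕ) (hm : 0 < m) (hn : 0 < n)
    (S : Fin m → Fin n → ℝ) (hS : ∀ i j, 0 ≤ S i j)
    (P₁ P₂ : Finset (Fin m)) (hsub : P₁ ⊆ P₂) :
    hval S P₁ ≤ hval S P₂ :=
  stmt_1_general hn.ne' S (sum_nonneg fun i _ => sum_nonneg fun j _ => hS i j) hsub
end
end

section
/- Upper bound on the true marginal gain of f: for every subset P of {1,…,m} with |P| < k and every j ∈ {1,…,m} with j ∉ P, f(P ∪ {j}) − f(P) ≤ max{⟨S(j,·), v⟩ : v ∈ ℝ_{≥0}^n, Σ_{i=1}^n v_i = 1, v ≤ (k/n)𝟙} ≤ α_{j,max}, where S(j,·) denotes the j-th row of S. -/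
open Finset

noncomputable section

/-- Sum of the `t` largest entries of `s`, as the maximum of `∑_{i ∈ T} s i`
over subsets `T` of cardinality `t`. -/
def topSum {n : ℕ} (t : ℕ) (s : Fin n → ℝ) : ℝ :=
  sSup {x : ℝ | ∃ T : Finset (Fin n), T.card = t ∧ x = ∑ i ∈ T, s i}

/-- Sum of the `t` smallest entries of `s`, as the minimum of `∑_{i ∈ T} s i`
over subsets `T` of cardinality `t`. -/
def botSum {n : ℕ} (t : ℕ) (s : Fin n → ℝ) : ℝ :=
  sInf {x : ℝ | ∃ T : Finset (Fin n), T.card = t ∧ x = ∑ i ∈ T, s i}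

/-- `α_{j,max} = (1/⌊n/k⌋)·(sum of the ⌊n/k⌋ largest entries of row j of S)`. -/
def alphaMax {m n : ℕ} (k : ℕ) (S : Fin m → Fin n → ℝ) (j : Fin m) : ℝ :=
  (1 / ((n / k : ℕ) : ℝ)) * topSum (n / k) (S j)

/-- `α_{j,min} = (1/⌊n/k⌋)·(sum of the ⌊n/k⌋ smallest entries of row j of S)`. -/
def alphaMin {m n : ℕ} (k : ℕ) (S : Fin m → Fin n → ℝ) (j : Fin m) : ℝ :=
  (1 / ((n / k : ℕ) : ℝ)) * botSum (n / k) (S j)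

/-- Approximate marginal gain
`f̂(x_j ∣ P) = max{⟨S(j,·), v⟩ : v ≥ 0, 𝟙ᵀv = 1, v ≤ (k/n)𝟙 − γ_Pᵀ𝟙}`. -/
def fhat {m n : ℕ} (k : ℕ) (S : Fin m → Fin n → ℝ)
    (γP : Fin m → Fin n → ℝ) (j : Fin m) : ℝ :=
  sSup {x : ℝ | ∃ v : Fin n → ℝ, (∀ i, 0 ≤ v i) ∧ (∑ i, v i = 1) ∧
    (∀ i, v i ≤ (k : ℝ) / (n : ℝ) - ∑ l, γP l i) ∧ x = ∑ i, S j i * v i}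

/-!
Deleting row `j` of a plan for `P ∪ {j}` leaves a plan for `P`, and the deleted row is itself a
feasible vector for the one-row problem; this splits the value of every plan and gives the first
inequality. The second is the bathtub principle: a vector of mass `1` whose entries are at most
`1 / t` pairs best with `s` when it puts weight `1 / t` on the `t` largest entries of `s`, and
`k / n ≤ 1 / ⌊n / k⌋`. As `|P| < k`, the uniform plan for `P ∪ {j}` is feasible, so none of the
suprema is taken over an empty set.
-/

open Function (update)
open scoped Matrix

section CappedSimplex

variable {ι : Type*} [Fintype ι]

/-- The set of nonnegative vectors of total mass `a` lying below the capacity vector `ν`: the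
possible rows of a semi-relaxed transport plan. -/
def cappedSimplex (a : ℝ) (ν : ι → ℝ) : Set (ι → ℝ) :=
  {v | (∀ i, 0 ≤ v i) ∧ ∑ i, v i = a ∧ ∀ i, v i ≤ ν i}

/-- The maximum of the linear functional `⟨s, ·⟩` over `cappedSimplex a ν`, encoded as a supremum;
it has the junk value `0` when the polytope is empty. -/
def cappedMax (a : ℝ) (ν s : ι → ℝ) : ℝ :=
  sSup ((s ⬝ᵥ ·) '' cappedSimplex a ν)

theorem cappedMax_eq_sSup (a : ℝ) (ν s : ι → ℝ) :
    cappedMax a ν s = sSup {x : ℝ | ∃ v : ι → ℝ, (∀ i, 0 ≤ v i) ∧ (∑ i, v i = a) ∧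
      (∀ i, v i ≤ ν i) ∧ x = ∑ i, s i * v i} := by
  simp only [cappedMax, cappedSimplex, Set.image, Set.mem_ofPred_eq, and_assoc, dotProduct, eq_comm]

theorem bddAbove_dotProduct_image_cappedSimplex (a : ℝ) (ν s : ι → ℝ) :
    BddAbove ((s ⬝ᵥ ·) '' cappedSimplex a ν) := by
  refine ⟨∑ i, |s i| * ν i, ?_⟩
  rintro _ ⟨v, ⟨hv_nonneg, -, hv_le⟩, rfl⟩
  refine sum_le_sum fun i _ => ?_
  calc s i * v i ≤ |s i| * v i := mul_le_mul_of_nonneg_right (le_abs_self _) (hv_nonneg i)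
    _ ≤ |s i| * ν i := mul_le_mul_of_nonneg_left (hv_le i) (abs_nonneg _)

theorem dotProduct_le_cappedMax {a : ℝ} {ν s v : ι → ℝ} (hv : v ∈ cappedSimplex a ν) :
    s ⬝ᵥ v ≤ cappedMax a ν s :=
  le_csSup (bddAbove_dotProduct_image_cappedSimplex a ν s) ⟨v, hv, rfl⟩

end CappedSimplex

section RowDeletion

variable {m n : ℕ} {μ : Fin m → ℝ} {ν : Fin n → ℝ} {γ : Fin m → Fin n → ℝ}

namespace GammaLe

theorem row_mem_cappedSimplex (hγ : γ ∈ GammaLe μ ν) (i : Fin m) :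
    γ i ∈ cappedSimplex (μ i) ν := by
  obtain ⟨hγ_nonneg, hγ_row, hγ_col⟩ := hγ
  exact ⟨hγ_nonneg i, hγ_row i, fun l =>
    (single_le_sum (f := (γ · l)) (fun i _ => hγ_nonneg i l) (mem_univ i)).trans (hγ_col l)⟩

theorem update_zero_mem (hγ : γ ∈ GammaLe μ ν) (j : Fin m) :
    update γ j 0 ∈ GammaLe (update μ j 0) ν := by
  obtain ⟨hγ_nonneg, hγ_row, hγ_col⟩ := hγ
  have update_le : ∀ i l, update γ j 0 i l ≤ γ i l := fun i l => by
    obtain rfl | hij := eq_or_ne i j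
    · simpa using hγ_nonneg i l
    · simp [hij]
  refine ⟨fun i l => ?_, fun i => ?_, fun l =>
    (sum_le_sum fun i _ => update_le i l).trans (hγ_col l)⟩
  all_goals obtain rfl | hij := eq_or_ne i j
  · simp
  · simpa [hij] using hγ_nonneg i l
  · simp
  · simpa [hij] using hγ_row i

/-- The product plan `μ ⊗ ν / ∑ ν` is feasible. -/
theorem nonempty (hμ : ∀ i, 0 ≤ μ i) (hν : ∀ l, 0 ≤ ν l) (hμν : ∑ i, μ i ≤ ∑ l, ν l) :
    (GammaLe μ ν).Nonempty := by
  have hμ_sum : 0 ≤ ∑ i, μ i := sum_nonneg fun i _ => hμ i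
  have hν_sum : 0 ≤ ∑ l, ν l := sum_nonneg fun l _ => hν l
  refine ⟨fun i l => μ i * ν l / ∑ l, ν l, fun i l => ?_, fun i => ?_, fun l => ?_⟩
  · exact div_nonneg (mul_nonneg (hμ i) (hν l)) hν_sum
  · rw [← sum_div, ← mul_sum]
    refine mul_div_cancel_of_imp fun hν_zero => ?_
    have hμ_zero : ∑ i, μ i = 0 := (hμν.trans_eq hν_zero).antisymm hμ_sum
    exact (sum_eq_zero_iff_of_nonneg fun i _ => hμ i).1 hμ_zero i (mem_univ i)
  · rw [← sum_div, ← sum_mul, mul_div_right_comm]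
    exact mul_le_of_le_one_left (hν l) (div_le_one_of_le₀ hμν hν_sum)

end GammaLe

theorem dotS_eq_row_add_dotS_update_zero (S γ : Fin m → Fin n → ℝ) (j : Fin m) :
    dotS S γ = S j ⬝ᵥ γ j + dotS S (update γ j 0) := by
  have row_eq : ∀ i ∈ univ.erase j, S i ⬝ᵥ update γ j 0 i = S i ⬝ᵥ γ i := fun i hi => by
    rw [Function.update_of_ne (ne_of_mem_erase hi)]
  calc dotS S γ = S j ⬝ᵥ γ j + ∑ i ∈ univ.erase j, S i ⬝ᵥ γ i :=
        (add_sum_erase univ (fun i => S i ⬝ᵥ γ i) (mem_univ j)).symm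
    _ = S j ⬝ᵥ γ j + ∑ i, S i ⬝ᵥ update γ j 0 i := by
        rw [← add_sum_erase univ _ (mem_univ j), sum_congr rfl row_eq, Function.update_self,
          dotProduct_zero, zero_add]

theorem bddAbove_dotS_image_GammaLe (S : Fin m → Fin n → ℝ) (μ : Fin m → ℝ) (ν : Fin n → ℝ) :
    BddAbove (dotS S '' GammaLe μ ν) := by
  refine ⟨∑ i, cappedMax (μ i) ν (S i), ?_⟩
  rintro _ ⟨γ, hγ, rfl⟩
  exact sum_le_sum fun i _ => dotProduct_le_cappedMax (GammaLe.row_mem_cappedSimplex hγ i)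

theorem sSup_dotS_image_GammaLe_le_cappedMax_add (S : Fin m → Fin n → ℝ)
    (hne : (GammaLe μ ν).Nonempty) (j : Fin m) :
    sSup (dotS S '' GammaLe μ ν) ≤
      cappedMax (μ j) ν (S j) + sSup (dotS S '' GammaLe (update μ j 0) ν) := by
  refine csSup_le (hne.image _) ?_
  rintro _ ⟨γ, hγ, rfl⟩
  rw [dotS_eq_row_add_dotS_update_zero S γ j]
  exact add_le_add (dotProduct_le_cappedMax (GammaLe.row_mem_cappedSimplex hγ j))
    (le_csSup (bddAbove_dotS_image_GammaLe S _ ν) ⟨_, GammaLe.update_zero_mem hγ j, rfl⟩)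

end RowDeletion

section Bathtub

theorem exists_card_eq_and_threshold {ι α : Type*} [Fintype ι] [LinearOrder α] [Nonempty α]
    (s : ι → α) {t : ℕ} (ht : t ≤ Fintype.card ι) :
    ∃ T : Finset ι, T.card = t ∧ ∃ θ, (∀ i ∈ T, θ ≤ s i) ∧ ∀ i ∉ T, s i ≤ θ := by
  classical
  induction t with
  | zero =>
    obtain ⟨θ, hθ⟩ := (Set.finite_range s).bddAbove
    exact ⟨∅, card_empty, θ, by simp, fun i _ => hθ ⟨i, rfl⟩⟩
  | succ t ih =>
    obtain ⟨T, hT_card, θ, hθ_le, hle_θ⟩ := ih (by lia)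
    have hTc : Tᶜ.Nonempty := by
      rw [← card_pos, card_compl]
      lia
    obtain ⟨b, hb, hb_max⟩ := exists_max_image Tᶜ s hTc
    rw [mem_compl] at hb
    refine ⟨insert b T, by rw [card_insert_of_notMem hb, hT_card], s b, ?_, fun i hi => ?_⟩
    · exact (forall_mem_insert _ _ _).2 ⟨le_rfl, fun i hi => (hle_θ b hb).trans (hθ_le i hi)⟩
    · exact hb_max i (mem_compl.2 fun hiT => hi (mem_insert_of_mem hiT))

-- The threshold `θ` is the dual variable of the mass constraint: after subtracting it from `s`,
-- the inequality holds term by term.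
theorem sum_mul_le_mul_sum_of_threshold {ι R : Type*} [Fintype ι] [CommRing R] [PartialOrder R]
    [IsOrderedRing R] {s v : ι → R} {T : Finset ι} {c θ : R}
    (hθ_le : ∀ i ∈ T, θ ≤ s i) (hle_θ : ∀ i ∉ T, s i ≤ θ)
    (hv_nonneg : ∀ i, 0 ≤ v i) (hv_le : ∀ i, v i ≤ c) (hv_sum : ∑ i, v i = c * T.card) :
    ∑ i, s i * v i ≤ c * ∑ i ∈ T, s i := by
  classical
  have term_le : ∀ i, (s i - θ) * v i ≤ if i ∈ T then (s i - θ) * c else 0 := fun i => by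
    split_ifs with hi
    · exact mul_le_mul_of_nonneg_left (hv_le i) (sub_nonneg.2 (hθ_le i hi))
    · exact mul_nonpos_of_nonpos_of_nonneg (sub_nonpos.2 (hle_θ i hi)) (hv_nonneg i)
  calc ∑ i, s i * v i = ∑ i, (s i - θ) * v i + θ * (c * T.card) := by
        simp only [sub_mul, sum_sub_distrib, ← mul_sum, hv_sum, sub_add_cancel]
    _ ≤ ∑ i ∈ T, (s i - θ) * c + θ * (c * T.card) := by
        rw [← sum_ite_mem_eq T]
        exact add_le_add_left (sum_le_sum fun i _ => term_le i) _
    _ = c * ∑ i ∈ T, s i := by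
        rw [← sum_mul, sum_sub_distrib, sum_const, nsmul_eq_mul]
        ring

variable {n t : ℕ}

theorem sum_le_topSum (s : Fin n → ℝ) {T : Finset (Fin n)} (hT : T.card = t) :
    ∑ i ∈ T, s i ≤ topSum t s := by
  refine le_csSup (Set.Finite.bddAbove ?_) ⟨T, hT, rfl⟩
  refine (Set.finite_range fun T : Finset (Fin n) => ∑ i ∈ T, s i).subset ?_
  rintro _ ⟨T, -, rfl⟩
  exact ⟨T, rfl⟩

theorem cappedMax_le_mul_topSum {a c : ℝ} {ν : Fin n → ℝ} (s : Fin n → ℝ) (ht : t ≤ n)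
    (hc : 0 ≤ c) (ha : a = c * t) (hν : ∀ i, ν i ≤ c) (hne : (cappedSimplex a ν).Nonempty) :
    cappedMax a ν s ≤ c * topSum t s := by
  obtain ⟨T, rfl, θ, hθ_le, hle_θ⟩ :=
    exists_card_eq_and_threshold s (ht.trans_eq (Fintype.card_fin n).symm)
  refine csSup_le (hne.image _) ?_
  rintro _ ⟨v, ⟨hv_nonneg, hv_sum, hv_le⟩, rfl⟩
  calc s ⬝ᵥ v ≤ c * ∑ i ∈ T, s i := sum_mul_le_mul_sum_of_threshold hθ_le hle_θ hv_nonneg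
        (fun i => (hv_le i).trans (hν i)) (hv_sum.trans ha)
    _ ≤ c * topSum T.card s := mul_le_mul_of_nonneg_left (sum_le_topSum s rfl) hc

end Bathtub

section MarginalGain

variable {m n k : ℕ}

theorem update_indVec_insert_zero {P : Finset (Fin m)} {j : Fin m} (hj : j ∉ P) :
    update (indVec (insert j P)) j 0 = indVec P := by
  ext i
  obtain rfl | hij := eq_or_ne i j
  · simp [indVec, hj]
  · simp [indVec, hij]

theorem GammaLe.nonempty_indVec {P : Finset (Fin m)} (hP : P.card ≤ k) (hn : 0 < n) :
    (GammaLe (indVec P) fun _ : Fin n => (k : ℝ) / n).Nonempty := by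
  have hn' : (n : ℝ) ≠ 0 := by positivity
  refine GammaLe.nonempty (fun i => ?_) (fun _ => by positivity) ?_
  · unfold indVec
    split_ifs <;> simp
  · simpa [indVec, mul_div_cancel₀ _ hn'] using hP

theorem fval_insert_sub_le_cappedMax (S : Fin m → Fin n → ℝ) {P : Finset (Fin m)}
    (hP : P.card < k) (hn : 0 < n) {j : Fin m} (hj : j ∉ P) :
    fval k S (insert j P) - fval k S P ≤ cappedMax 1 (fun _ => (k : ℝ) / n) (S j) := by
  have hne := GammaLe.nonempty_indVec (n := n) ((card_insert_le j P).trans hP) hn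
  have hgain := sSup_dotS_image_GammaLe_le_cappedMax_add S hne j
  have hmass : indVec (insert j P) j = 1 := by simp [indVec]
  rw [update_indVec_insert_zero hj, hmass] at hgain
  exact sub_le_iff_le_add.2 hgain

theorem cappedMax_le_alphaMax (S : Fin m → Fin n → ℝ) (hk : 0 < k) (hkn : k ≤ n) (j : Fin m) :
    cappedMax 1 (fun _ => (k : ℝ) / n) (S j) ≤ alphaMax k S j := by
  have ht : (0 : ℝ) < (n / k : ℕ) := by exact_mod_cast Nat.div_pos hkn hk
  have hcap : (k : ℝ) / n ≤ 1 / (n / k : ℕ) := by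
    rw [← one_div_div]
    exact one_div_le_one_div_of_le ht Nat.cast_div_le
  obtain ⟨γ, hγ⟩ :=
    GammaLe.nonempty_indVec (n := n) (P := {j}) ((card_singleton j).trans_le hk) (hk.trans_le hkn)
  have hrow := GammaLe.row_mem_cappedSimplex hγ j
  have hmass : indVec {j} j = 1 := by simp [indVec]
  rw [hmass] at hrow
  exact cappedMax_le_mul_topSum (S j) (Nat.div_le_self n k) (by positivity)
    (one_div_mul_cancel ht.ne').symm (fun _ => hcap) ⟨_, hrow⟩

end MarginalGain

theorem stmt_16_general (m n k : ℕ) (hkn : k ≤ n) (S : Fin m → Fin n → ℝ)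
    (P : Finset (Fin m)) (hP : P.card < k) (j : Fin m) (hj : j ∉ P) :
    fval k S (insert j P) - fval k S P ≤
      sSup {x : ℝ | ∃ v : Fin n → ℝ, (∀ i, 0 ≤ v i) ∧ (∑ i, v i = 1) ∧
        (∀ i, v i ≤ (k : ℝ) / (n : ℝ)) ∧ x = ∑ i, S j i * v i} ∧
    sSup {x : ℝ | ∃ v : Fin n → ℝ, (∀ i, 0 ≤ v i) ∧ (∑ i, v i = 1) ∧
        (∀ i, v i ≤ (k : ℝ) / (n : ℝ)) ∧ x = ∑ i, S j i * v i} ≤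
      alphaMax k S j := by
  have hk : 0 < k := Nat.zero_lt_of_lt hP
  rw [← cappedMax_eq_sSup 1 (fun _ => (k : ℝ) / n) (S j)]
  exact ⟨fval_insert_sub_le_cappedMax S hP (hk.trans_le hkn) hj, cappedMax_le_alphaMax S hk hkn j⟩

/-- upper bound on the true marginal gain of `f`. -/
theorem stmt_16 (m n k : ℕ) (hm : 0 < m) (hn : 0 < n) (hk : 0 < k)
    (hkm : k ≤ m) (hkn : k ≤ n)
    (S : Fin m → Fin n → ℝ) (hS : ∀ i j, 0 ≤ S i j)
    (P : Finset (Fin m)) (hP : P.card < k)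
    (j : Fin m) (hj : j ∉ P) :
    fval k S (insert j P) - fval k S P ≤
      sSup {x : ℝ | ∃ v : Fin n → ℝ, (∀ i, 0 ≤ v i) ∧ (∑ i, v i = 1) ∧
        (∀ i, v i ≤ (k : ℝ) / (n : ℝ)) ∧ x = ∑ i, S j i * v i} ∧
    sSup {x : ℝ | ∃ v : Fin n → ℝ, (∀ i, 0 ≤ v i) ∧ (∑ i, v i = 1) ∧
        (∀ i, v i ≤ (k : ℝ) / (n : ℝ)) ∧ x = ∑ i, S j i * v i} ≤
      alphaMax k S j :=
  stmt_16_general m n k hkn S P hP j hj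
end
end
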